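/- arXiv:1908.07620 — 2 statements merged into one kernel-verified Lean document; each statement's English description precedes it below -/
import Mathlib

section
/- The eight elements ω₁, ω₂, ω₃, ω₄, η₁, η₂, η₃, η₄ form a K-basis of A, and each of them is group-like: Δ(a) = a ⊗ a and ε(a) = 1 for every element a of this basis. -/
open MvPolynomial TensorProduct

/-- The defining ideal of the first example: generated by `x⁴ - 1` and
`y² - (1/2)(1 + ζx + x² - ζx³)`. -/
noncomputable def firstRelIdeal (K : Type*) [Field K] (ζ : K) :
    Ideal (MvPolynomial (Fin 2) K) :=
  Ideal.span {X 0 ^ 4 - 1,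
    X 1 ^ 2 - C ((2 : K)⁻¹) * (1 + C ζ * X 0 + X 0 ^ 2 - C ζ * X 0 ^ 3)}

/-- The first example: the commutative `K`-algebra generated by commuting elements `x`, `y`
subject to `x⁴ = 1` and `y² = (1/2)(1 + ζx + x² - ζx³)`. -/
abbrev FirstAlg (K : Type*) [Field K] (ζ : K) : Type _ :=
  MvPolynomial (Fin 2) K ⧸ firstRelIdeal K ζ

/-- The generator `x` of the first example. -/
noncomputable def xF (K : Type*) [Field K] (ζ : K) : FirstAlg K ζ :=
  Ideal.Quotient.mk (firstRelIdeal K ζ) (X 0)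

/-- The generator `y` of the first example. -/
noncomputable def yF (K : Type*) [Field K] (ζ : K) : FirstAlg K ζ :=
  Ideal.Quotient.mk (firstRelIdeal K ζ) (X 1)

/-- The group `G = ℤ/2 × ℤ/2`, written multiplicatively. -/
abbrev GG : Type := Multiplicative (ZMod 2 × ZMod 2)

/-- `g₁ = (0,0)`. -/
def g1 : GG := Multiplicative.ofAdd (0, 0)
/-- `g₂ = (1,0)`. -/
def g2 : GG := Multiplicative.ofAdd (1, 0)
/-- `g₃ = (0,1)`. -/
def g3 : GG := Multiplicative.ofAdd (0, 1)
/-- `g₄ = (1,1)`. -/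
def g4 : GG := Multiplicative.ofAdd (1, 1)

/-- The twisted multiplication of `A ⊗̂ A`:
`(a ⊗ b)(a' ⊗ b') = (1/4) ∑_{g,g'} θ(g,g') (a (g.a')) ⊗ ((g'.b) b')`,
extended bilinearly. -/
noncomputable def twMul {K : Type*} [Field K] {B : Type*} [Ring B] [Algebra K B]
    {G : Type*} [Monoid G] [Fintype G]
    (ρ : G →* (B →ₐ[K] B)) (θ : G → G → K)
    (z w : B ⊗[K] B) : B ⊗[K] B :=
  (4 : K)⁻¹ • ∑ g : G, ∑ g' : G, θ g g' •
    (TensorProduct.map (LinearMap.mul' K B) (LinearMap.mul' K B))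
      ((TensorProduct.tensorTensorTensorComm K B B B B)
        ((TensorProduct.map
            (TensorProduct.map LinearMap.id (ρ g').toLinearMap)
            (TensorProduct.map (ρ g).toLinearMap LinearMap.id))
          (z ⊗ₜ[K] w)))

/-- `ω₁ := 1`. -/
noncomputable def w1F (K : Type*) [Field K] (ζ : K) : FirstAlg K ζ := 1

/-- `ω₂ := (1/2)(1 + ιζ²)x + (1/2)(1 - ιζ²)x³`, where `ι = ξ²`. -/
noncomputable def w2F (K : Type*) [Field K] (ξ ζ : K) : FirstAlg K ζ :=
  ((2 : K)⁻¹ * (1 + ξ ^ 2 * ζ ^ 2)) • xF K ζ +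
    ((2 : K)⁻¹ * (1 - ξ ^ 2 * ζ ^ 2)) • (xF K ζ ^ 3)

/-- `ω₃ := (1/2)(1 - ιζ²)x + (1/2)(1 + ιζ²)x³`, where `ι = ξ²`. -/
noncomputable def w3F (K : Type*) [Field K] (ξ ζ : K) : FirstAlg K ζ :=
  ((2 : K)⁻¹ * (1 - ξ ^ 2 * ζ ^ 2)) • xF K ζ +
    ((2 : K)⁻¹ * (1 + ξ ^ 2 * ζ ^ 2)) • (xF K ζ ^ 3)

/-- `ω₄ := x²`. -/
noncomputable def w4F (K : Type*) [Field K] (ζ : K) : FirstAlg K ζ := xF K ζ ^ 2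

/-- `η₁ := y`. -/
noncomputable def e1F (K : Type*) [Field K] (ζ : K) : FirstAlg K ζ := yF K ζ

/-- `η₂ := x³y`. -/
noncomputable def e2F (K : Type*) [Field K] (ζ : K) : FirstAlg K ζ := xF K ζ ^ 3 * yF K ζ

/-- `η₃ := x²y`. -/
noncomputable def e3F (K : Type*) [Field K] (ζ : K) : FirstAlg K ζ := xF K ζ ^ 2 * yF K ζ

/-- `η₄ := xy`. -/
noncomputable def e4F (K : Type*) [Field K] (ζ : K) : FirstAlg K ζ := xF K ζ * yF K ζ

lemma IsPrimitiveRoot.pow_four_eq_neg_one {K : Type*} [Field K] {ξ : K}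
    (hξ : IsPrimitiveRoot ξ 8) : ξ ^ 4 = -1 := by
  have h1 : ξ ^ 4 ≠ 1 := hξ.pow_ne_one_of_pos_of_lt (by norm_num) (by norm_num)
  have h2 : (ξ ^ 4 - 1) * (ξ ^ 4 + 1) = 0 := by
    linear_combination hξ.pow_eq_one
  exact eq_neg_of_add_eq_zero_left ((mul_eq_zero.1 h2).resolve_left (sub_ne_zero.2 h1))

lemma IsPrimitiveRoot.two_ne_zero_of_eight {K : Type*} [Field K] {ξ : K}
    (hξ : IsPrimitiveRoot ξ 8) : (2 : K) ≠ 0 := fun h =>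
  hξ.pow_ne_one_of_pos_of_lt (l := 4) (by norm_num) (by norm_num)
    (by linear_combination hξ.pow_four_eq_neg_one - h)

lemma IsPrimitiveRoot.exists_sq_eq_of_pow_four_eq_one {K : Type*} [Field K] {ξ ζ : K}
    (hξ : IsPrimitiveRoot ξ 8) (hζ : ζ ^ 4 = 1) : ∃ s : K, s ^ 2 = ζ := by
  have h8 : ζ ^ 8 = 1 := by linear_combination (ζ ^ 4 + 1) * hζ
  obtain ⟨j, -, rfl⟩ := hξ.eq_pow_of_pow_eq_one h8
  rw [← pow_mul, hξ.pow_eq_one_iff_dvd] at hζ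
  obtain ⟨m, rfl⟩ : 2 ∣ j := by omega
  exact ⟨ξ ^ m, by rw [← pow_mul, mul_comm]⟩

section FirstAlg

variable {K : Type*} [Field K] {ζ : K}

lemma xF_pow_four : xF K ζ ^ 4 = 1 := by
  rw [xF, ← map_pow, ← map_one (Ideal.Quotient.mk _), Ideal.Quotient.eq]
  exact Ideal.subset_span (by simp)

lemma yF_sq : yF K ζ ^ 2 = algebraMap K _ (2 : K)⁻¹ *
    (1 + algebraMap K _ ζ * xF K ζ + xF K ζ ^ 2 - algebraMap K _ ζ * xF K ζ ^ 3) := by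
  have h : Ideal.Quotient.mk (firstRelIdeal K ζ) (X 1 ^ 2) = Ideal.Quotient.mk (firstRelIdeal K ζ)
      (C ((2 : K)⁻¹) * (1 + C ζ * X 0 + X 0 ^ 2 - C ζ * X 0 ^ 3)) := by
    rw [Ideal.Quotient.eq]
    exact Ideal.subset_span (by simp)
  exact h

/-- The point of the spectrum of the first example with coordinates `(a, b)`. -/
noncomputable def FirstAlg.eval (ζ a b : K) (ha : a ^ 4 = 1)
    (hb : b ^ 2 = (2 : K)⁻¹ * (1 + ζ * a + a ^ 2 - ζ * a ^ 3)) : FirstAlg K ζ →ₐ[K] K :=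
  Ideal.Quotient.liftₐ (firstRelIdeal K ζ) (aeval ![a, b]) fun p hp => by
    have : firstRelIdeal K ζ ≤ RingHom.ker (aeval ![a, b] : _ →ₐ[K] K) := by
      rw [firstRelIdeal, Ideal.span_le]
      rintro q (rfl | rfl) <;> simp [RingHom.mem_ker, ha, hb]
    exact this hp

lemma FirstAlg.eval_xF {a b : K} (ha : a ^ 4 = 1)
    (hb : b ^ 2 = (2 : K)⁻¹ * (1 + ζ * a + a ^ 2 - ζ * a ^ 3)) :
    FirstAlg.eval ζ a b ha hb (xF K ζ) = a := by
  change aeval ![a, b] (X 0) = a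
  simp

lemma FirstAlg.eval_yF {a b : K} (ha : a ^ 4 = 1)
    (hb : b ^ 2 = (2 : K)⁻¹ * (1 + ζ * a + a ^ 2 - ζ * a ^ 3)) :
    FirstAlg.eval ζ a b ha hb (yF K ζ) = b := by
  change aeval ![a, b] (X 1) = b
  simp

lemma FirstAlg.exists_eq_sum (z : FirstAlg K ζ) : ∃ c₀ c₁ c₂ c₃ d₀ d₁ d₂ d₃ : K,
    z = algebraMap K _ c₀ + algebraMap K _ c₁ * xF K ζ + algebraMap K _ c₂ * xF K ζ ^ 2 +
        algebraMap K _ c₃ * xF K ζ ^ 3 +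
      (algebraMap K _ d₀ + algebraMap K _ d₁ * xF K ζ + algebraMap K _ d₂ * xF K ζ ^ 2 +
        algebraMap K _ d₃ * xF K ζ ^ 3) * yF K ζ := by
  obtain ⟨p, rfl⟩ := Ideal.Quotient.mk_surjective z
  induction p using MvPolynomial.induction_on with
  | C a => exact ⟨a, 0, 0, 0, 0, 0, 0, 0, by simp; rfl⟩
  | add p q hp hq =>
    obtain ⟨c₀, c₁, c₂, c₃, d₀, d₁, d₂, d₃, h⟩ := hp
    obtain ⟨c₀', c₁', c₂', c₃', d₀', d₁', d₂', d₃', h'⟩ := hq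
    refine ⟨c₀ + c₀', c₁ + c₁', c₂ + c₂', c₃ + c₃', d₀ + d₀', d₁ + d₁', d₂ + d₂', d₃ + d₃', ?_⟩
    simp only [map_add, h, h']
    ring
  | mul_X p i hp =>
    obtain ⟨c₀, c₁, c₂, c₃, d₀, d₁, d₂, d₃, h⟩ := hp
    have h4 := xF_pow_four (ζ := ζ)
    have hy := yF_sq (ζ := ζ)
    rw [map_mul, h]
    match i with
    | 0 =>
      refine ⟨c₃, c₀, c₁, c₂, d₃, d₀, d₁, d₂, ?_⟩
      rw [show Ideal.Quotient.mk (firstRelIdeal K ζ) (X 0) = xF K ζ from rfl]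
      linear_combination (algebraMap K _ c₃ + algebraMap K _ d₃ * yF K ζ) * h4
    | 1 =>
      refine ⟨2⁻¹ * (d₀ + ζ * d₃ + d₂ - ζ * d₁), 2⁻¹ * (d₁ + ζ * d₀ + d₃ - ζ * d₂),
        2⁻¹ * (d₂ + ζ * d₁ + d₀ - ζ * d₃), 2⁻¹ * (d₃ + ζ * d₂ + d₁ - ζ * d₀),
        c₀, c₁, c₂, c₃, ?_⟩
      rw [show Ideal.Quotient.mk (firstRelIdeal K ζ) (X 1) = yF K ζ from rfl]
      simp only [map_mul, map_add, map_sub]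
      generalize algebraMap K (FirstAlg K ζ) 2⁻¹ = t at *
      generalize algebraMap K (FirstAlg K ζ) ζ = u at *
      generalize algebraMap K (FirstAlg K ζ) d₀ = e₀ at *
      generalize algebraMap K (FirstAlg K ζ) d₁ = e₁ at *
      generalize algebraMap K (FirstAlg K ζ) d₂ = e₂ at *
      generalize algebraMap K (FirstAlg K ζ) d₃ = e₃ at *
      linear_combination (e₀ + e₁ * xF K ζ + e₂ * xF K ζ ^ 2 + e₃ * xF K ζ ^ 3) * hy +
        t * (u * e₃ + e₂ - u * e₁ + xF K ζ * (e₃ - u * e₂) - u * e₃ * xF K ζ ^ 2) * h4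

lemma FirstAlg.linearIndependent_groupLike {ξ : K} (hξ : IsPrimitiveRoot ξ 8) (hζ : ζ ^ 4 = 1)
    (v : Fin 8 → FirstAlg K ζ)
    (hv : v = ![w1F K ζ, w2F K ξ ζ, w3F K ξ ζ, w4F K ζ,
        e1F K ζ, e2F K ζ, e3F K ζ, e4F K ζ]) :
    LinearIndependent K v := by
  have h2 : (2 : K) ≠ 0 := hξ.two_ne_zero_of_eight
  have hξ4 : ξ ^ 4 = -1 := hξ.pow_four_eq_neg_one
  have hs : (ξ ^ 2 * ζ ^ 2) ^ 2 = -1 := by linear_combination ζ ^ 4 * hξ4 - hζ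
  have hA : (2 : K)⁻¹ * 2 = 1 := inv_mul_cancel₀ h2
  obtain ⟨r, hr⟩ := hξ.exists_sq_eq_of_pow_four_eq_one hζ
  rw [Fintype.linearIndependent_iff]
  intro c hc
  have key : ∀ a b : K, a ^ 4 = 1 →
      b ^ 2 = (2 : K)⁻¹ * (1 + ζ * a + a ^ 2 - ζ * a ^ 3) →
      c 0 + c 1 * (2⁻¹ * (1 + ξ ^ 2 * ζ ^ 2) * a + 2⁻¹ * (1 - ξ ^ 2 * ζ ^ 2) * a ^ 3) +
        c 2 * (2⁻¹ * (1 - ξ ^ 2 * ζ ^ 2) * a + 2⁻¹ * (1 + ξ ^ 2 * ζ ^ 2) * a ^ 3) +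
        c 3 * a ^ 2 + b * (c 4 + c 5 * a ^ 3 + c 6 * a ^ 2 + c 7 * a) = 0 := by
    intro a b ha hb
    have h := congrArg (FirstAlg.eval ζ a b ha hb) hc
    simp [hv, Fin.sum_univ_eight, w1F, w2F, w3F, w4F, e1F, e2F, e3F, e4F,
      FirstAlg.eval_xF, FirstAlg.eval_yF] at h
    linear_combination h
  have key' : ∀ a b : K, a ^ 4 = 1 → b ≠ 0 →
      b ^ 2 = (2 : K)⁻¹ * (1 + ζ * a + a ^ 2 - ζ * a ^ 3) →
      c 0 + c 1 * (2⁻¹ * (1 + ξ ^ 2 * ζ ^ 2) * a + 2⁻¹ * (1 - ξ ^ 2 * ζ ^ 2) * a ^ 3) +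
        c 2 * (2⁻¹ * (1 - ξ ^ 2 * ζ ^ 2) * a + 2⁻¹ * (1 + ξ ^ 2 * ζ ^ 2) * a ^ 3) +
        c 3 * a ^ 2 = 0 ∧ c 4 + c 5 * a ^ 3 + c 6 * a ^ 2 + c 7 * a = 0 := by
    intro a b ha hb0 hb
    have h₁ := key a b ha hb
    have h₂ := key a (-b) ha (by rw [neg_sq, hb])
    refine ⟨mul_left_cancel₀ h2 ?_, mul_left_cancel₀ (mul_ne_zero h2 hb0) ?_⟩
    · linear_combination h₁ + h₂
    · linear_combination h₁ - h₂
  have hξ0 : ξ ≠ 0 := hξ.ne_zero (by norm_num)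
  have hr0 : r ≠ 0 := by
    rintro rfl
    simp [← hr] at hζ
  obtain ⟨P₁, Q₁⟩ := key' 1 1 (by norm_num) one_ne_zero (by linear_combination -hA)
  obtain ⟨P₂, Q₂⟩ := key' (-1) 1 (by norm_num) one_ne_zero (by linear_combination -hA)
  obtain ⟨P₃, Q₃⟩ := key' (ξ ^ 2) (r * ξ) (by linear_combination hξ.pow_eq_one)
    (mul_ne_zero hr0 hξ0)
    (by linear_combination ξ ^ 2 * hr - ζ * ξ ^ 2 * hA + 2⁻¹ * (ζ * ξ ^ 2 - 1) * hξ4)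
  obtain ⟨P₄, Q₄⟩ := key' (-ξ ^ 2) (r * ξ ^ 3) (by linear_combination hξ.pow_eq_one)
    (mul_ne_zero hr0 (pow_ne_zero 3 hξ0))
    (by linear_combination ξ ^ 6 * hr + ζ * ξ ^ 2 * hξ4 + ζ * ξ ^ 2 * hA -
      2⁻¹ * (ζ * ξ ^ 2 + 1) * hξ4)
  have hu : (ξ ^ 2) ^ 2 = -1 := by rw [← pow_mul, hξ4]
  generalize (2 : K)⁻¹ = t at *
  generalize ξ ^ 2 * ζ ^ 2 = s at *
  generalize ξ ^ 2 = u at *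
  have p₁ : c 0 + c 1 + c 2 + c 3 = 0 := by
    linear_combination P₁ - (c 1 + c 2) * hA
  have p₂ : c 0 - c 1 - c 2 + c 3 = 0 := by
    linear_combination P₂ + (c 1 + c 2) * hA
  have p₃ : c 0 + s * u * (c 1 - c 2) - c 3 = 0 := by
    linear_combination P₃ - (c 1 * t * (1 - s) * u + c 2 * t * (1 + s) * u + c 3) * hu -
      (c 1 - c 2) * s * u * hA
  have p₄ : c 0 - s * u * (c 1 - c 2) - c 3 = 0 := by
    linear_combination P₄ + (c 1 * t * (1 - s) * u + c 2 * t * (1 + s) * u - c 3) * hu +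
      (c 1 - c 2) * s * u * hA
  have q₃ : c 4 - u * (c 5 - c 7) - c 6 = 0 := by
    linear_combination Q₃ - (c 5 * u + c 6) * hu
  have q₄ : c 4 + u * (c 5 - c 7) - c 6 = 0 := by
    linear_combination Q₄ + (c 5 * u - c 6) * hu
  have h4 : (2 * 2 : K) ≠ 0 := mul_ne_zero h2 h2
  intro i
  apply mul_left_cancel₀ h4
  fin_cases i <;> simp only [Fin.zero_eta, Fin.mk_one, Fin.reduceFinMk]
  · linear_combination p₁ + p₂ + p₃ + p₄
  · linear_combination p₁ - p₂ + s * u * (p₃ - p₄) - 2 * (c 1 - c 2) * (u ^ 2 * hs - hu)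
  · linear_combination p₁ - p₂ - s * u * (p₃ - p₄) + 2 * (c 1 - c 2) * (u ^ 2 * hs - hu)
  · linear_combination p₁ + p₂ - p₃ - p₄
  · linear_combination Q₁ + Q₂ + q₃ + q₄
  · linear_combination Q₁ - Q₂ - u * (q₄ - q₃) + 2 * (c 5 - c 7) * hu
  · linear_combination Q₁ + Q₂ - q₃ - q₄
  · linear_combination Q₁ - Q₂ + u * (q₄ - q₃) - 2 * (c 5 - c 7) * hu

lemma FirstAlg.span_groupLike {ξ : K} (hξ : IsPrimitiveRoot ξ 8) (hζ : ζ ^ 4 = 1)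
    (v : Fin 8 → FirstAlg K ζ)
    (hv : v = ![w1F K ζ, w2F K ξ ζ, w3F K ξ ζ, w4F K ζ,
        e1F K ζ, e2F K ζ, e3F K ζ, e4F K ζ]) :
    Submodule.span K (Set.range v) = ⊤ := by
  have h2 : (2 : K) ≠ 0 := hξ.two_ne_zero_of_eight
  have hξ4 : ξ ^ 4 = -1 := hξ.pow_four_eq_neg_one
  have hs : (ξ ^ 2 * ζ ^ 2) ^ 2 = -1 := by linear_combination ζ ^ 4 * hξ4 - hζ
  have hA : (2 : K)⁻¹ * 2 = 1 := inv_mul_cancel₀ h2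
  rw [eq_top_iff]
  rintro z -
  obtain ⟨c₀, c₁, c₂, c₃, d₀, d₁, d₂, d₃, rfl⟩ := FirstAlg.exists_eq_sum z
  have hm (i : Fin 8) : v i ∈ Submodule.span K (Set.range v) :=
    Submodule.subset_span ⟨i, rfl⟩
  have hx : xF K ζ = (-(ξ ^ 2 * ζ ^ 2) * (2⁻¹ * (1 + ξ ^ 2 * ζ ^ 2))) • w2F K ξ ζ +
      (ξ ^ 2 * ζ ^ 2 * (2⁻¹ * (1 - ξ ^ 2 * ζ ^ 2))) • w3F K ξ ζ := by
    rw [w2F, w3F]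
    match_scalars <;> grind
  have hx3 : xF K ζ ^ 3 = (-(ξ ^ 2 * ζ ^ 2) * (2⁻¹ * (1 + ξ ^ 2 * ζ ^ 2))) • w3F K ξ ζ +
      (ξ ^ 2 * ζ ^ 2 * (2⁻¹ * (1 - ξ ^ 2 * ζ ^ 2))) • w2F K ξ ζ := by
    rw [w2F, w3F]
    match_scalars <;> grind
  have m0 : (1 : FirstAlg K ζ) ∈ Submodule.span K (Set.range v) := by
    simpa [hv, w1F] using hm 0
  have mw2 : w2F K ξ ζ ∈ Submodule.span K (Set.range v) := by simpa [hv] using hm 1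
  have mw3 : w3F K ξ ζ ∈ Submodule.span K (Set.range v) := by simpa [hv] using hm 2
  have m1 : xF K ζ ∈ Submodule.span K (Set.range v) := by
    rw [hx]
    exact add_mem (Submodule.smul_mem _ _ mw2) (Submodule.smul_mem _ _ mw3)
  have m2 : xF K ζ ^ 2 ∈ Submodule.span K (Set.range v) := by simpa [hv, w4F] using hm 3
  have m3 : xF K ζ ^ 3 ∈ Submodule.span K (Set.range v) := by
    rw [hx3]
    exact add_mem (Submodule.smul_mem _ _ mw3) (Submodule.smul_mem _ _ mw2)
  have n0 : yF K ζ ∈ Submodule.span K (Set.range v) := by simpa [hv, e1F] using hm 4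
  have n3 : xF K ζ ^ 3 * yF K ζ ∈ Submodule.span K (Set.range v) := by
    simpa [hv, e2F] using hm 5
  have n2 : xF K ζ ^ 2 * yF K ζ ∈ Submodule.span K (Set.range v) := by
    simpa [hv, e3F] using hm 6
  have n1 : xF K ζ * yF K ζ ∈ Submodule.span K (Set.range v) := by simpa [hv, e4F] using hm 7
  simp only [add_mul, Algebra.algebraMap_eq_smul_one, smul_mul_assoc, one_mul]
  exact add_mem (add_mem (add_mem (add_mem (Submodule.smul_mem _ _ m0)
    (Submodule.smul_mem _ _ m1)) (Submodule.smul_mem _ _ m2)) (Submodule.smul_mem _ _ m3))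
    (add_mem (add_mem (add_mem (Submodule.smul_mem _ _ n0)
    (Submodule.smul_mem _ _ n1)) (Submodule.smul_mem _ _ n2)) (Submodule.smul_mem _ _ n3))

end FirstAlg

section twMul

variable {K : Type*} [Field K] {B : Type*} [CommRing B] [Algebra K B]

lemma twMul_eq {G : Type*} [Monoid G] [Fintype G] (ρ : G →* (B →ₐ[K] B)) (θ : G → G → K)
    (z w : B ⊗[K] B) :
    twMul ρ θ z w = (4 : K)⁻¹ • ∑ g : G, ∑ g' : G, θ g g' •
      (Algebra.TensorProduct.map (AlgHom.id K B) (ρ g') z *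
        Algebra.TensorProduct.map (ρ g) (AlgHom.id K B) w) := by
  unfold twMul
  congr 1
  refine Finset.sum_congr rfl fun g _ => Finset.sum_congr rfl fun g' _ => ?_
  congr 1
  induction z with
  | zero => simp
  | add z z' hz hz' => simp only [add_tmul, map_add, add_mul, hz, hz']
  | tmul a b =>
    induction w with
    | zero => simp
    | add w w' hw hw' => simp only [tmul_add, map_add, mul_add, hw, hw']
    | tmul a' b' => simp

/-- A bicharacter of `GG` with the given values on the generators twists the multiplication as
follows against a left factor fixed by `g3` acting on its second leg. -/
lemma twMul_of_map_g3 (h2 : (2 : K) ≠ 0) {ζ : K}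
    (ρ : GG →* (B →ₐ[K] B)) (θ : GG → GG → K)
    (hθr : ∀ g h h' : GG, θ g (h * h') = θ g h * θ g h')
    (hθl : ∀ g g' h : GG, θ (g * g') h = θ g h * θ g' h)
    (hθ22 : θ g2 g2 = ζ ^ 2) (hθ23 : θ g2 g3 = -1)
    (hθ32 : θ g3 g2 = -1) (hθ33 : θ g3 g3 = 1) {z w : B ⊗[K] B}
    (hz : Algebra.TensorProduct.map (AlgHom.id K B) (ρ g3) z = z) :
    twMul ρ θ z w = algebraMap K _ (2 : K)⁻¹ *
      (z * (w + Algebra.TensorProduct.map (ρ g3) (AlgHom.id K B) w) +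
        Algebra.TensorProduct.map (AlgHom.id K B) (ρ g2) z *
          (w - Algebra.TensorProduct.map (ρ g3) (AlgHom.id K B) w)) := by
  have hu : (Finset.univ : Finset GG) = {1, g2, g3, g2 * g3} := by decide
  have e1 : ∀ f : GG → B ⊗[K] B, ∑ g, f g = f 1 + (f g2 + (f g3 + f (g2 * g3))) := by
    intro f
    rw [hu, Finset.sum_insert (by decide), Finset.sum_insert (by decide),
      Finset.sum_insert (by decide), Finset.sum_singleton]
  have r1 : ∀ g, θ g g3 ≠ 0 → θ g 1 = 1 := fun g hg => by
    have := hθr g g3 1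
    rw [mul_one] at this
    exact mul_left_cancel₀ hg (by rw [← this, mul_one])
  have l1 : ∀ g, θ g3 g ≠ 0 → θ 1 g = 1 := fun g hg => by
    have := hθl g3 1 g
    rw [mul_one] at this
    exact mul_left_cancel₀ hg (by rw [← this, mul_one])
  have t21 := r1 g2 (by simp [hθ23])
  have t31 := r1 g3 (by simp [hθ33])
  have t12 := l1 g2 (by simp [hθ32])
  have t13 := l1 g3 (by simp [hθ33])
  have t11 : θ 1 1 = 1 := r1 1 (by simp [t13])
  have hL : Algebra.TensorProduct.map (AlgHom.id K B) (ρ (g2 * g3)) z =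
      Algebra.TensorProduct.map (AlgHom.id K B) (ρ g2) z := by
    have : Algebra.TensorProduct.map (AlgHom.id K B) (ρ (g2 * g3)) =
        (Algebra.TensorProduct.map (AlgHom.id K B) (ρ g2)).comp
          (Algebra.TensorProduct.map (AlgHom.id K B) (ρ g3)) := by
      rw [map_mul]
      ext <;> simp
    rw [this, AlgHom.comp_apply, hz]
  have h1L : Algebra.TensorProduct.map (AlgHom.id K B) (ρ 1) z = z := by
    rw [map_one]
    exact congrArg (fun f : B ⊗[K] B →ₐ[K] B ⊗[K] B => f z) Algebra.TensorProduct.map_id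
  have h1R : Algebra.TensorProduct.map (ρ 1) (AlgHom.id K B) w = w := by
    rw [map_one]
    exact congrArg (fun f : B ⊗[K] B →ₐ[K] B ⊗[K] B => f w) Algebra.TensorProduct.map_id
  have h4 : (4 : K)⁻¹ = 2⁻¹ * 2⁻¹ := by rw [← mul_inv]; norm_num
  have hA : algebraMap K (B ⊗[K] B) 2⁻¹ * 2 = 1 := by
    rw [← map_ofNat (algebraMap K (B ⊗[K] B)) 2, ← map_mul, inv_mul_cancel₀ h2, map_one]
  rw [twMul_eq]
  simp only [e1, hθr, hθl, t11, t12, t13, t21, t31, hθ22, hθ23, hθ32, hθ33, hz, hL, h1L, h1R]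
  generalize Algebra.TensorProduct.map (AlgHom.id K B) (ρ g2) z = z2
  generalize Algebra.TensorProduct.map (ρ g3) (AlgHom.id K B) w = w3
  generalize Algebra.TensorProduct.map (ρ g2) (AlgHom.id K B) w = w2
  generalize Algebra.TensorProduct.map (ρ (g2 * g3)) (AlgHom.id K B) w = w4
  simp only [Algebra.smul_def, h4, map_mul, map_pow, map_neg, map_one]
  generalize algebraMap K (B ⊗[K] B) 2⁻¹ = t at *
  linear_combination t * (z * (w + w3) + z2 * (w - w3)) * hA

lemma twMul_of_map_g3_of_map_g3 (h2 : (2 : K) ≠ 0) {ζ : K}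
    (ρ : GG →* (B →ₐ[K] B)) (θ : GG → GG → K)
    (hθr : ∀ g h h' : GG, θ g (h * h') = θ g h * θ g h')
    (hθl : ∀ g g' h : GG, θ (g * g') h = θ g h * θ g' h)
    (hθ22 : θ g2 g2 = ζ ^ 2) (hθ23 : θ g2 g3 = -1)
    (hθ32 : θ g3 g2 = -1) (hθ33 : θ g3 g3 = 1) {z w : B ⊗[K] B}
    (hz : Algebra.TensorProduct.map (AlgHom.id K B) (ρ g3) z = z)
    (hw : Algebra.TensorProduct.map (ρ g3) (AlgHom.id K B) w = w) :
    twMul ρ θ z w = z * w := by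
  have hA : algebraMap K (B ⊗[K] B) 2⁻¹ * 2 = 1 := by
    rw [← map_ofNat (algebraMap K (B ⊗[K] B)) 2, ← map_mul, inv_mul_cancel₀ h2, map_one]
  rw [twMul_of_map_g3 h2 ρ θ hθr hθl hθ22 hθ23 hθ32 hθ33 hz, hw]
  linear_combination z * w * hA

/-- The coproducts of the monomials in `x` and `y`. -/
lemma coproduct_monomials (h2 : (2 : K) ≠ 0) {ζ : K}
    (ρ : GG →* (B →ₐ[K] B)) (θ : GG → GG → K)
    (hθr : ∀ g h h' : GG, θ g (h * h') = θ g h * θ g h')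
    (hθl : ∀ g g' h : GG, θ (g * g') h = θ g h * θ g' h)
    (hθ22 : θ g2 g2 = ζ ^ 2) (hθ23 : θ g2 g3 = -1)
    (hθ32 : θ g3 g2 = -1) (hθ33 : θ g3 g3 = 1)
    {x y : B} (hx : x ^ 4 = 1)
    (hρ2x : ρ g2 x = x ^ 3) (hρ3x : ρ g3 x = x) (hρ3y : ρ g3 y = x ^ 2 * y)
    (Δ : B →ₗ[K] B ⊗[K] B) (hΔm : ∀ a b : B, Δ (a * b) = twMul ρ θ (Δ a) (Δ b))
    (hΔx : Δ x = (2 : K)⁻¹ • (x ⊗ₜ[K] x + x ⊗ₜ[K] (x ^ 3) + (x ^ 3) ⊗ₜ[K] x -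
      (x ^ 3) ⊗ₜ[K] (x ^ 3)))
    (hΔy : Δ y = y ⊗ₜ[K] y) :
    Δ (x ^ 2) = (x ^ 2) ⊗ₜ[K] (x ^ 2) ∧
    Δ (x ^ 3) = (2 : K)⁻¹ • ((x ^ 3) ⊗ₜ[K] (x ^ 3) + (x ^ 3) ⊗ₜ[K] x + x ⊗ₜ[K] (x ^ 3) -
      x ⊗ₜ[K] x) ∧
    Δ (x * y) = (x * y) ⊗ₜ[K] (x * y) ∧
    Δ (x ^ 2 * y) = (x ^ 2 * y) ⊗ₜ[K] (x ^ 2 * y) ∧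
    Δ (x ^ 3 * y) = (x ^ 3 * y) ⊗ₜ[K] (x ^ 3 * y) := by
  have hA : algebraMap K (B ⊗[K] B) 2⁻¹ * 2 = 1 := by
    rw [← map_ofNat (algebraMap K (B ⊗[K] B)) 2, ← map_mul, inv_mul_cancel₀ h2, map_one]
  have ht : ∀ a b : B, a ⊗ₜ[K] b = (a ⊗ₜ[K] (1 : B)) * ((1 : B) ⊗ₜ[K] b) := by simp
  have hl : ∀ (a b : B), (a * b) ⊗ₜ[K] (1 : B) = (a ⊗ₜ[K] (1 : B)) * (b ⊗ₜ[K] (1 : B)) := by simp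
  have hr : ∀ (a b : B), (1 : B) ⊗ₜ[K] (a * b) = ((1 : B) ⊗ₜ[K] a) * ((1 : B) ⊗ₜ[K] b) := by simp
  have hlp : ∀ (a : B) (n : ℕ), (a ^ n) ⊗ₜ[K] (1 : B) = (a ⊗ₜ[K] (1 : B)) ^ n := by simp
  have hrp : ∀ (a : B) (n : ℕ), (1 : B) ⊗ₜ[K] (a ^ n) = ((1 : B) ⊗ₜ[K] a) ^ n := by simp
  have hX : (x ⊗ₜ[K] (1 : B)) ^ 4 = 1 := by rw [← hlp, hx]; rfl
  have hX' : ((1 : B) ⊗ₜ[K] x) ^ 4 = 1 := by rw [← hrp, hx]; rfl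
  have Lx : Algebra.TensorProduct.map (AlgHom.id K B) (ρ g3) (Δ x) = Δ x := by
    simp [hΔx, hρ3x]
  have Rx : Algebra.TensorProduct.map (ρ g3) (AlgHom.id K B) (Δ x) = Δ x := by
    simp [hΔx, hρ3x]
  have Ry : Algebra.TensorProduct.map (ρ g3) (AlgHom.id K B) (Δ y) =
      (x ^ 2 * y) ⊗ₜ[K] y := by
    simp [hΔy, hρ3y]
  have L2x : Algebra.TensorProduct.map (AlgHom.id K B) (ρ g2) (Δ x) =
      (2 : K)⁻¹ • (x ⊗ₜ[K] (x ^ 3) + x ⊗ₜ[K] ((x ^ 3) ^ 3) + (x ^ 3) ⊗ₜ[K] (x ^ 3) -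
      (x ^ 3) ⊗ₜ[K] ((x ^ 3) ^ 3)) := by
    simp [hΔx, hρ2x]
  have Dxx : Δ (x ^ 2) = (x ^ 2) ⊗ₜ[K] (x ^ 2) := by
    rw [pow_two, hΔm, twMul_of_map_g3_of_map_g3 h2 ρ θ hθr hθl hθ22 hθ23 hθ32 hθ33 Lx Rx, hΔx]
    simp only [Algebra.smul_def, ht x x, ht x (x ^ 3), ht (x ^ 3) x, ht (x ^ 3) (x ^ 3),
      ht (x * x) (x * x), hl, hr, hlp, hrp]
    generalize algebraMap K (B ⊗[K] B) 2⁻¹ = t at *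
    generalize x ⊗ₜ[K] (1 : B) = X at *
    generalize (1 : B) ⊗ₜ[K] x = X' at *
    grind
  have Lxx : Algebra.TensorProduct.map (AlgHom.id K B) (ρ g3) (Δ (x ^ 2)) = Δ (x ^ 2) := by
    simp [Dxx, hρ3x]
  have Dx3 : Δ (x ^ 3) = (2 : K)⁻¹ • ((x ^ 3) ⊗ₜ[K] (x ^ 3) + (x ^ 3) ⊗ₜ[K] x +
      x ⊗ₜ[K] (x ^ 3) - x ⊗ₜ[K] x) := by
    rw [pow_succ x 2, hΔm, twMul_of_map_g3_of_map_g3 h2 ρ θ hθr hθl hθ22 hθ23 hθ32 hθ33 Lxx Rx,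
      hΔx, Dxx, ← pow_succ]
    simp only [Algebra.smul_def, ht x x, ht x (x ^ 3), ht (x ^ 3) x, ht (x ^ 3) (x ^ 3),
      ht (x ^ 2) (x ^ 2), hlp, hrp]
    generalize algebraMap K (B ⊗[K] B) 2⁻¹ = t at *
    generalize x ⊗ₜ[K] (1 : B) = X at *
    generalize (1 : B) ⊗ₜ[K] x = X' at *
    grind
  have Lx3 : Algebra.TensorProduct.map (AlgHom.id K B) (ρ g3) (Δ (x ^ 3)) = Δ (x ^ 3) := by
    simp [Dx3, hρ3x]
  have L2x3 : Algebra.TensorProduct.map (AlgHom.id K B) (ρ g2) (Δ (x ^ 3)) =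
      (2 : K)⁻¹ • ((x ^ 3) ⊗ₜ[K] ((x ^ 3) ^ 3) + (x ^ 3) ⊗ₜ[K] (x ^ 3) +
      x ⊗ₜ[K] ((x ^ 3) ^ 3) - x ⊗ₜ[K] (x ^ 3)) := by
    simp [Dx3, hρ2x]
  have L2xx : Algebra.TensorProduct.map (AlgHom.id K B) (ρ g2) (Δ (x ^ 2)) =
      (x ^ 2) ⊗ₜ[K] ((x ^ 3) ^ 2) := by
    simp [Dxx, hρ2x]
  refine ⟨Dxx, Dx3, ?_, ?_, ?_⟩
  · rw [hΔm, twMul_of_map_g3 h2 ρ θ hθr hθl hθ22 hθ23 hθ32 hθ33 Lx, Ry, L2x, hΔx, hΔy]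
    simp only [Algebra.smul_def, ht x x, ht x (x ^ 3), ht (x ^ 3) x, ht (x ^ 3) (x ^ 3),
      ht x ((x ^ 3) ^ 3), ht (x ^ 3) ((x ^ 3) ^ 3), ht y y, ht (x * y) (x * y), ht (x ^ 2 * y) y,
      hl, hr, hlp, hrp]
    generalize algebraMap K (B ⊗[K] B) 2⁻¹ = t at *
    generalize x ⊗ₜ[K] (1 : B) = X at *
    generalize (1 : B) ⊗ₜ[K] x = X' at *
    generalize y ⊗ₜ[K] (1 : B) = Y at *
    generalize (1 : B) ⊗ₜ[K] y = Y' at *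
    grind
  · rw [hΔm, twMul_of_map_g3 h2 ρ θ hθr hθl hθ22 hθ23 hθ32 hθ33 Lxx, Ry, L2xx, Dxx, hΔy]
    simp only [ht (x ^ 2) (x ^ 2), ht (x ^ 2) ((x ^ 3) ^ 2), ht y y, ht (x ^ 2 * y) (x ^ 2 * y),
      ht (x ^ 2 * y) y,
      hl, hr, hlp, hrp]
    generalize algebraMap K (B ⊗[K] B) 2⁻¹ = t at *
    generalize x ⊗ₜ[K] (1 : B) = X at *
    generalize (1 : B) ⊗ₜ[K] x = X' at *
    generalize y ⊗ₜ[K] (1 : B) = Y at *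
    generalize (1 : B) ⊗ₜ[K] y = Y' at *
    grind
  · rw [hΔm, twMul_of_map_g3 h2 ρ θ hθr hθl hθ22 hθ23 hθ32 hθ33 Lx3, Ry, L2x3, Dx3, hΔy]
    simp only [Algebra.smul_def, ht x x, ht x (x ^ 3), ht (x ^ 3) x, ht (x ^ 3) (x ^ 3),
      ht x ((x ^ 3) ^ 3), ht (x ^ 3) ((x ^ 3) ^ 3), ht y y, ht (x ^ 2 * y) y, ht (x ^ 3 * y) (x ^ 3 * y), hl, hr, hlp, hrp]
    generalize algebraMap K (B ⊗[K] B) 2⁻¹ = t at *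
    generalize x ⊗ₜ[K] (1 : B) = X at *
    generalize (1 : B) ⊗ₜ[K] x = X' at *
    generalize y ⊗ₜ[K] (1 : B) = Y at *
    generalize (1 : B) ⊗ₜ[K] y = Y' at *
    grind

/-- If `s² = -1`, the element taking the values `1` and `s` relative to `x` on the eigenspaces
of `x²` is group-like. -/
lemma coproduct_half_combination (h2 : (2 : K) ≠ 0) {s : K} (hs : s ^ 2 = -1) {x : B}
    (Δ : B →ₗ[K] B ⊗[K] B)
    (hΔx : Δ x = (2 : K)⁻¹ • (x ⊗ₜ[K] x + x ⊗ₜ[K] (x ^ 3) + (x ^ 3) ⊗ₜ[K] x -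
      (x ^ 3) ⊗ₜ[K] (x ^ 3)))
    (hΔx3 : Δ (x ^ 3) = (2 : K)⁻¹ • ((x ^ 3) ⊗ₜ[K] (x ^ 3) + (x ^ 3) ⊗ₜ[K] x +
      x ⊗ₜ[K] (x ^ 3) - x ⊗ₜ[K] x)) :
    Δ (((2 : K)⁻¹ * (1 + s)) • x + ((2 : K)⁻¹ * (1 - s)) • x ^ 3) =
      (((2 : K)⁻¹ * (1 + s)) • x + ((2 : K)⁻¹ * (1 - s)) • x ^ 3) ⊗ₜ[K]
        (((2 : K)⁻¹ * (1 + s)) • x + ((2 : K)⁻¹ * (1 - s)) • x ^ 3) := by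
  have hA : (2 : K)⁻¹ * 2 = 1 := inv_mul_cancel₀ h2
  simp only [map_add, map_smul, hΔx, hΔx3, add_tmul, tmul_add, ← smul_tmul', tmul_smul]
  generalize (2 : K)⁻¹ = t at *
  match_scalars <;> grind

end twMul

theorem stmt_8 {K : Type*} [Field K] (ξ : K) (hξ : IsPrimitiveRoot ξ 8)
    (ζ : K) (hζ : ζ ^ 4 = 1)
    (ρ : GG →* (FirstAlg K ζ →ₐ[K] FirstAlg K ζ))
    (hρ2x : ρ g2 (xF K ζ) = xF K ζ ^ 3) (hρ2y : ρ g2 (yF K ζ) = xF K ζ ^ 3 * yF K ζ)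
    (hρ3x : ρ g3 (xF K ζ) = xF K ζ) (hρ3y : ρ g3 (yF K ζ) = xF K ζ ^ 2 * yF K ζ)
    (θ : GG → GG → K)
    (hθr : ∀ g h h' : GG, θ g (h * h') = θ g h * θ g h')
    (hθl : ∀ g g' h : GG, θ (g * g') h = θ g h * θ g' h)
    (hθ22 : θ g2 g2 = ζ ^ 2) (hθ23 : θ g2 g3 = -1)
    (hθ32 : θ g3 g2 = -1) (hθ33 : θ g3 g3 = 1)
    -- the coproduct `Δ : A → A ⊗̂ A`, an algebra homomorphism with
    -- `Δ(x) = (1/2)(x ⊗ x + x ⊗ x³ + x³ ⊗ x - x³ ⊗ x³)` and `Δ(y) = y ⊗ y`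
    (Δ : FirstAlg K ζ →ₗ[K] FirstAlg K ζ ⊗[K] FirstAlg K ζ)
    (hΔ1 : Δ 1 = (1 : FirstAlg K ζ) ⊗ₜ[K] (1 : FirstAlg K ζ))
    (hΔm : ∀ a b : FirstAlg K ζ, Δ (a * b) = twMul ρ θ (Δ a) (Δ b))
    (hΔx : Δ (xF K ζ) = (2 : K)⁻¹ •
      ((xF K ζ) ⊗ₜ[K] (xF K ζ) + (xF K ζ) ⊗ₜ[K] (xF K ζ ^ 3) +
        (xF K ζ ^ 3) ⊗ₜ[K] (xF K ζ) - (xF K ζ ^ 3) ⊗ₜ[K] (xF K ζ ^ 3)))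
    (hΔy : Δ (yF K ζ) = (yF K ζ) ⊗ₜ[K] (yF K ζ))
    -- the counit `ε : A → K` with `ε(x) = ε(y) = 1`
    (ε : FirstAlg K ζ →ₐ[K] K)
    (hεx : ε (xF K ζ) = 1) (hεy : ε (yF K ζ) = 1)
    (v : Fin 8 → FirstAlg K ζ)
    (hv : v = ![w1F K ζ, w2F K ξ ζ, w3F K ξ ζ, w4F K ζ,
        e1F K ζ, e2F K ζ, e3F K ζ, e4F K ζ]) :
    LinearIndependent K v ∧ Submodule.span K (Set.range v) = ⊤ ∧
      ∀ i : Fin 8, Δ (v i) = (v i) ⊗ₜ[K] (v i) ∧ ε (v i) = 1 := by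
  have h2 : (2 : K) ≠ 0 := hξ.two_ne_zero_of_eight
  have hξ4 : ξ ^ 4 = -1 := hξ.pow_four_eq_neg_one
  have hs : (ξ ^ 2 * ζ ^ 2) ^ 2 = -1 := by linear_combination ζ ^ 4 * hξ4 - hζ
  have hs' : (-(ξ ^ 2 * ζ ^ 2)) ^ 2 = -1 := by linear_combination ζ ^ 4 * hξ4 - hζ
  have hA : (2 : K)⁻¹ * 2 = 1 := inv_mul_cancel₀ h2
  refine ⟨FirstAlg.linearIndependent_groupLike hξ hζ v hv, FirstAlg.span_groupLike hξ hζ v hv, ?_⟩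
  obtain ⟨Dx2, Dx3, Dxy, Dx2y, Dx3y⟩ := coproduct_monomials h2 ρ θ hθr hθl hθ22 hθ23 hθ32
    hθ33 xF_pow_four hρ2x hρ3x hρ3y Δ hΔm hΔx hΔy
  have D2 := coproduct_half_combination h2 hs Δ hΔx Dx3
  have D3 := coproduct_half_combination h2 hs' Δ hΔx Dx3
  rw [sub_neg_eq_add, ← sub_eq_add_neg] at D3
  have hε : (2 : K)⁻¹ * (1 + ξ ^ 2 * ζ ^ 2) + 2⁻¹ * (1 - ξ ^ 2 * ζ ^ 2) = 1 := by
    linear_combination hA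
  have hε' : (2 : K)⁻¹ * (1 - ξ ^ 2 * ζ ^ 2) + 2⁻¹ * (1 + ξ ^ 2 * ζ ^ 2) = 1 := by
    linear_combination hA
  subst hv
  intro i
  fin_cases i
  · exact ⟨hΔ1, map_one ε⟩
  · exact ⟨D2, by simp [w2F, hεx, hε]⟩
  · exact ⟨D3, by simp [w3F, hεx, hε']⟩
  · exact ⟨Dx2, by simp [w4F, hεx]⟩
  · exact ⟨hΔy, hεy⟩
  · exact ⟨Dx3y, by simp [e2F, hεx, hεy]⟩
  · exact ⟨Dx2y, by simp [e3F, hεx, hεy]⟩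
  · exact ⟨Dxy, by simp [e4F, hεx, hεy]⟩
end

section
/- Let S : A → A be the K-linear endomorphism determined on the basis ω₁, ω₂, ω₃, ω₄, η₁, η₂, η₃, η₄ by S(ωᵢ) = ωᵢ for i = 1,2,3,4 and S(η₁) = (1/2)(ζ⁻¹η₁ + η₂ − ζ⁻¹η₃ + η₄), S(η₂) = (1/2)(η₁ + ζ⁻¹η₂ + η₃ − ζ⁻¹η₄), S(η₃) = (1/2)(−ζ⁻¹η₁ + η₂ + ζ⁻¹η₃ + η₄), S(η₄) = (1/2)(η₁ − ζ⁻¹η₂ + η₃ + ζ⁻¹η₄). Then S is an antipode for (A, Δ, ε): writing Δ(a) = ∑ a₁ ⊗ a₂, one has ∑ S(a₁)a₂ = ε(a)1 = ∑ a₁S(a₂) for all a ∈ A. -/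
open TensorProduct

/-- The defining relations of the second example: `x⁴ = 1`, `xy = yx³`, and
`y² = (1/2)(ζ + x - ζx² + x³)`. -/
inductive SecondRel (K : Type*) [Field K] (ζ : K) :
    FreeAlgebra K (Fin 2) → FreeAlgebra K (Fin 2) → Prop
  | x_pow_four : SecondRel K ζ (FreeAlgebra.ι K 0 ^ 4) 1
  | x_mul_y : SecondRel K ζ (FreeAlgebra.ι K 0 * FreeAlgebra.ι K 1)
      (FreeAlgebra.ι K 1 * FreeAlgebra.ι K 0 ^ 3)
  | y_sq : SecondRel K ζ (FreeAlgebra.ι K 1 ^ 2)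
      ((2 : K)⁻¹ • (ζ • (1 : FreeAlgebra K (Fin 2)) + FreeAlgebra.ι K 0
        - ζ • (FreeAlgebra.ι K 0 ^ 2) + FreeAlgebra.ι K 0 ^ 3))

/-- The second example: the `K`-algebra generated by noncommuting elements `x`, `y`
subject to `x⁴ = 1`, `xy = yx³` and `y² = (1/2)(ζ + x - ζx² + x³)`. -/
abbrev SecondAlg (K : Type*) [Field K] (ζ : K) : Type _ := RingQuot (SecondRel K ζ)

/-- The generator `x` of the second example. -/
noncomputable def xS (K : Type*) [Field K] (ζ : K) : SecondAlg K ζ :=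
  RingQuot.mkAlgHom K (SecondRel K ζ) (FreeAlgebra.ι K 0)

/-- The generator `y` of the second example. -/
noncomputable def yS (K : Type*) [Field K] (ζ : K) : SecondAlg K ζ :=
  RingQuot.mkAlgHom K (SecondRel K ζ) (FreeAlgebra.ι K 1)

/-- `ω₁ := 1`. -/
noncomputable def w1S (K : Type*) [Field K] (ζ : K) : SecondAlg K ζ := 1

/-- `ω₂ := (1/2)(1 + ιζ²)x + (1/2)(1 - ιζ²)x³`. -/
noncomputable def w2S (K : Type*) [Field K] (i ζ : K) : SecondAlg K ζ :=
  ((2 : K)⁻¹ * (1 + i * ζ ^ 2)) • xS K ζ +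
    ((2 : K)⁻¹ * (1 - i * ζ ^ 2)) • (xS K ζ ^ 3)

/-- `ω₃ := (1/2)(1 - ιζ²)x + (1/2)(1 + ιζ²)x³`. -/
noncomputable def w3S (K : Type*) [Field K] (i ζ : K) : SecondAlg K ζ :=
  ((2 : K)⁻¹ * (1 - i * ζ ^ 2)) • xS K ζ +
    ((2 : K)⁻¹ * (1 + i * ζ ^ 2)) • (xS K ζ ^ 3)

/-- `ω₄ := x²`. -/
noncomputable def w4S (K : Type*) [Field K] (ζ : K) : SecondAlg K ζ := xS K ζ ^ 2

/-- `η₁ := y`. -/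
noncomputable def e1S (K : Type*) [Field K] (ζ : K) : SecondAlg K ζ := yS K ζ

/-- `η₂ := x³y`. -/
noncomputable def e2S (K : Type*) [Field K] (ζ : K) : SecondAlg K ζ := xS K ζ ^ 3 * yS K ζ

/-- `η₃ := x²y`. -/
noncomputable def e3S (K : Type*) [Field K] (ζ : K) : SecondAlg K ζ := xS K ζ ^ 2 * yS K ζ

/-- `η₄ := xy`. -/
noncomputable def e4S (K : Type*) [Field K] (ζ : K) : SecondAlg K ζ := xS K ζ * yS K ζ

section SecondAlg

variable {K : Type*} [Field K] {ζ : K}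

lemma xS_pow_four : xS K ζ ^ 4 = 1 := by
  simpa [xS] using RingQuot.mkAlgHom_rel K (SecondRel.x_pow_four (K := K) (ζ := ζ))

lemma xS_mul_yS : xS K ζ * yS K ζ = yS K ζ * xS K ζ ^ 3 := by
  simpa [xS, yS] using RingQuot.mkAlgHom_rel K (SecondRel.x_mul_y (K := K) (ζ := ζ))

lemma yS_mul_yS : yS K ζ * yS K ζ =
    (2 : K)⁻¹ • (ζ • (1 : SecondAlg K ζ) + xS K ζ - ζ • xS K ζ ^ 2 + xS K ζ ^ 3) := by
  simpa only [xS, yS, map_pow, map_smul, map_add, map_sub, map_one, sq (RingQuot.mkAlgHom K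
    (SecondRel K ζ) (FreeAlgebra.ι K 1))] using
    RingQuot.mkAlgHom_rel K (SecondRel.y_sq (K := K) (ζ := ζ))

lemma xS_pow_add_four (n : ℕ) : xS K ζ ^ (n + 4) = xS K ζ ^ n := by
  rw [pow_add, xS_pow_four, mul_one]

lemma yS_mul_xS : yS K ζ * xS K ζ = xS K ζ ^ 3 * yS K ζ := by
  have h (n : ℕ) : xS K ζ ^ n * yS K ζ = yS K ζ * xS K ζ ^ (3 * n) := by
    induction n with
    | zero => simp
    | succ n ih => rw [pow_succ, mul_assoc, xS_mul_yS, ← mul_assoc, ih, mul_assoc, ← pow_add,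
        mul_add, mul_one]
  rw [h, xS_pow_add_four 5, xS_pow_add_four 1, pow_one]

lemma yS_mul_xS_pow (n : ℕ) : yS K ζ * xS K ζ ^ n = xS K ζ ^ (3 * n) * yS K ζ := by
  induction n with
  | zero => simp
  | succ n ih => rw [pow_succ, ← mul_assoc, ih, mul_assoc, yS_mul_xS, ← mul_assoc, ← pow_add,
      mul_add, mul_one]

/-- The words `xⁿ` and `xⁿy` span the second example. -/
lemma span_xS_pow_yS : Submodule.span K
    (Set.range (fun n : ℕ ↦ xS K ζ ^ n) ∪ Set.range (fun n : ℕ ↦ xS K ζ ^ n * yS K ζ)) = ⊤ := by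
  set P := Submodule.span K
    (Set.range (fun n : ℕ ↦ xS K ζ ^ n) ∪ Set.range (fun n : ℕ ↦ xS K ζ ^ n * yS K ζ)) with hP
  have hx (n : ℕ) : xS K ζ ^ n ∈ P := Submodule.subset_span (.inl ⟨n, rfl⟩)
  have hxy (n : ℕ) : xS K ζ ^ n * yS K ζ ∈ P := Submodule.subset_span (.inr ⟨n, rfl⟩)
  have mem (a b : SecondAlg K ζ) (hb : b ∈ P) : a * b ∈ P := by
    obtain ⟨a, rfl⟩ := RingQuot.mkAlgHom_surjective K (SecondRel K ζ) a
    induction a generalizing b with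
    | grade0 r => simpa [Algebra.algebraMap_eq_smul_one] using P.smul_mem r hb
    | add a a' ha ha' =>
      rw [map_add, add_mul]
      exact P.add_mem (ha b hb) (ha' b hb)
    | mul a a' ha ha' =>
      rw [map_mul, mul_assoc]
      exact ha _ (ha' b hb)
    | grade1 i =>
      induction hb using Submodule.span_induction with
      | zero => simp
      | add b b' _ _ hb hb' => rw [mul_add]; exact P.add_mem hb hb'
      | smul r b _ hb => rw [mul_smul_comm]; exact P.smul_mem r hb
      | mem b hb =>
        fin_cases i
        · change xS K ζ * b ∈ P
          rcases hb with ⟨n, rfl⟩ | ⟨n, rfl⟩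
          · simpa only [← pow_succ'] using hx (n + 1)
          · simpa only [← mul_assoc, ← pow_succ'] using hxy (n + 1)
        · change yS K ζ * b ∈ P
          rcases hb with ⟨n, rfl⟩ | ⟨n, rfl⟩
          · simpa only [yS_mul_xS_pow] using hxy (3 * n)
          · simp only [← mul_assoc, yS_mul_xS_pow]
            rw [mul_assoc, yS_mul_yS]
            simp only [mul_smul_comm, mul_add, mul_sub, mul_one, ← pow_add, ← pow_succ]
            exact P.smul_mem _ (P.add_mem (P.sub_mem (P.add_mem (P.smul_mem _ (hx _)) (hx _))
              (P.smul_mem _ (hx _))) (hx _))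
  exact eq_top_iff.mpr fun a _ ↦ by simpa using mem a 1 (by simpa using hx 0)

lemma secondAlg_linearMap_ext {M : Type*} [AddCommMonoid M] [Module K M]
    {f g : SecondAlg K ζ →ₗ[K] M}
    (h : ∀ n < 4, f (xS K ζ ^ n) = g (xS K ζ ^ n))
    (h' : ∀ n < 4, f (xS K ζ ^ n * yS K ζ) = g (xS K ζ ^ n * yS K ζ)) : f = g := by
  have hmod (n : ℕ) : xS K ζ ^ n = xS K ζ ^ (n % 4) := pow_eq_pow_mod n xS_pow_four
  refine LinearMap.ext_on span_xS_pow_yS ?_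
  rintro _ (⟨n, rfl⟩ | ⟨n, rfl⟩)
  · simpa only [hmod n] using h _ (Nat.mod_lt n four_pos)
  · simpa only [hmod n] using h' _ (Nat.mod_lt n four_pos)

end SecondAlg

section twMul

variable {K : Type*} [Field K] {B : Type*} [Ring B] [Algebra K B]

section Monoid

variable {G : Type*} [Monoid G] [Fintype G] (ρ : G →* (B →ₐ[K] B)) (θ : G → G → K)

lemma twMul_add_left (z z' w : B ⊗[K] B) :
    twMul ρ θ (z + z') w = twMul ρ θ z w + twMul ρ θ z' w := by
  simp only [twMul, add_tmul, map_add, smul_add, Finset.sum_add_distrib]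

lemma twMul_add_right (z w w' : B ⊗[K] B) :
    twMul ρ θ z (w + w') = twMul ρ θ z w + twMul ρ θ z w' := by
  simp only [twMul, tmul_add, map_add, smul_add, Finset.sum_add_distrib]

lemma twMul_smul_left (r : K) (z w : B ⊗[K] B) :
    twMul ρ θ (r • z) w = r • twMul ρ θ z w := by
  simp only [twMul, ← smul_tmul', map_smul, Finset.smul_sum, smul_comm r]

lemma twMul_smul_right (r : K) (z w : B ⊗[K] B) :
    twMul ρ θ z (r • w) = r • twMul ρ θ z w := by
  simp only [twMul, tmul_smul, map_smul, Finset.smul_sum, smul_comm r]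

lemma twMul_sub_left (z z' w : B ⊗[K] B) :
    twMul ρ θ (z - z') w = twMul ρ θ z w - twMul ρ θ z' w := by
  simp only [twMul, sub_tmul, map_sub, smul_sub, Finset.sum_sub_distrib]

lemma twMul_sub_right (z w w' : B ⊗[K] B) :
    twMul ρ θ z (w - w') = twMul ρ θ z w - twMul ρ θ z w' := by
  simp only [twMul, tmul_sub, map_sub, smul_sub, Finset.sum_sub_distrib]

lemma twMul_tmul_tmul (a b c d : B) :
    twMul ρ θ (a ⊗ₜ b) (c ⊗ₜ d) =
      (4 : K)⁻¹ • ∑ g, ∑ g', θ g g' • ((a * ρ g c) ⊗ₜ[K] (ρ g' b * d)) := by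
  simp [twMul]

end Monoid

lemma GG.sum_eq {M : Type*} [AddCommMonoid M] (f : GG → M) :
    ∑ g, f g = f g1 + f g2 + f g3 + f g4 := by
  have : (Finset.univ : Finset GG) = {g1, g2, g3, g4} := by decide
  rw [this, Finset.sum_insert (by decide), Finset.sum_insert (by decide),
    Finset.sum_insert (by decide), Finset.sum_singleton]
  abel

lemma twMul_tmul_tmul_of_fixed (h2 : (2 : K) ≠ 0) (ρ : GG →* (B →ₐ[K] B)) (θ : GG → GG → K)
    (hθr : ∀ g h h' : GG, θ g (h * h') = θ g h * θ g h')
    (hθl : ∀ g g' h : GG, θ (g * g') h = θ g h * θ g' h)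
    (hθ23 : θ g2 g3 = -1) (hθ32 : θ g3 g2 = -1) (hθ33 : θ g3 g3 = 1)
    {b : B} (hb : ρ g3 b = b) (a c d : B) :
    twMul ρ θ (a ⊗ₜ b) (c ⊗ₜ d) =
      (2 : K)⁻¹ • ((a * c + a * ρ g3 c) ⊗ₜ[K] (b * d) +
        (a * c - a * ρ g3 c) ⊗ₜ[K] (ρ g2 b * d)) := by
  have e1 : g1 = 1 := rfl
  have e4 : g4 = g2 * g3 := rfl
  have t13 : θ g1 g3 = 1 := by
    have := hθl g1 g2 g3
    rw [e1, one_mul, hθ23] at this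
    rw [e1]; linear_combination this
  have t12 : θ g1 g2 = 1 := by
    have := hθl g1 g3 g2
    rw [e1, one_mul, hθ32] at this
    rw [e1]; linear_combination this
  have t31 : θ g3 g1 = 1 := by
    have := hθr g3 g1 g2
    rw [e1, one_mul, hθ32] at this
    rw [e1]; linear_combination this
  have t21 : θ g2 g1 = 1 := by
    have := hθr g2 g1 g3
    rw [e1, one_mul, hθ23] at this
    rw [e1]; linear_combination this
  have t11 : θ g1 g1 = 1 := by
    have := hθl g1 g3 g1
    rw [t31, e1, one_mul, ← e1, t31] at this
    linear_combination -this
  have h4 : (4 : K)⁻¹ = 2⁻¹ * 2⁻¹ := by rw [← mul_inv]; norm_num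
  have hhalf : (2 : K)⁻¹ * 2 = 1 := inv_mul_cancel₀ h2
  simp only [twMul_tmul_tmul, GG.sum_eq, e4, hθl, hθr, t11, t12, t13, t21, t31, hθ23, hθ32, hθ33,
    map_mul, AlgHom.mul_apply, hb]
  simp only [e1, map_one, AlgHom.one_apply, h4, add_tmul, sub_tmul]
  match_scalars <;>
    first | ring1 | linear_combination 2⁻¹ * hhalf | linear_combination -2⁻¹ * hhalf

/-- A coproduct that is multiplicative for `twMul` is determined on words by its values on the
generators; all words `xⁿy`, as well as `x²`, are group-like. -/
lemma coproduct_words (h2 : (2 : K) ≠ 0) (ρ : GG →* (B →ₐ[K] B)) (θ : GG → GG → K)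
    (hθr : ∀ g h h' : GG, θ g (h * h') = θ g h * θ g h')
    (hθl : ∀ g g' h : GG, θ (g * g') h = θ g h * θ g' h)
    (hθ23 : θ g2 g3 = -1) (hθ32 : θ g3 g2 = -1) (hθ33 : θ g3 g3 = 1)
    {x y : B} (p4 : x ^ 4 = 1)
    (hρ2x : ρ g2 x = x ^ 3) (hρ3x : ρ g3 x = x) (hρ3y : ρ g3 y = x ^ 2 * y)
    {Δ : B →ₗ[K] B ⊗[K] B} (hΔm : ∀ a b : B, Δ (a * b) = twMul ρ θ (Δ a) (Δ b))
    (hΔx : Δ x = (2 : K)⁻¹ • (x ⊗ₜ[K] x + x ⊗ₜ[K] (x ^ 3) +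
      (x ^ 3) ⊗ₜ[K] x - (x ^ 3) ⊗ₜ[K] (x ^ 3)))
    (hΔy : Δ y = y ⊗ₜ[K] y) :
    Δ (x ^ 2) = (x ^ 2) ⊗ₜ[K] (x ^ 2) ∧
    Δ (x ^ 3) = (2 : K)⁻¹ • ((x ^ 3) ⊗ₜ[K] (x ^ 3) + (x ^ 3) ⊗ₜ[K] (x ^ 1) +
      (x ^ 1) ⊗ₜ[K] (x ^ 3) - (x ^ 1) ⊗ₜ[K] (x ^ 1)) ∧
    Δ (x ^ 1 * y) = (x ^ 1 * y) ⊗ₜ[K] (x ^ 1 * y) ∧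
    Δ (x ^ 2 * y) = (x ^ 2 * y) ⊗ₜ[K] (x ^ 2 * y) ∧
    Δ (x ^ 3 * y) = (x ^ 3 * y) ⊗ₜ[K] (x ^ 3 * y) := by
  have p5 : x ^ 5 = x ^ 1 := by rw [pow_add x 4 1, p4, one_mul]
  have p6 : x ^ 6 = x ^ 2 := by rw [pow_add x 4 2, p4, one_mul]
  have p9 : x ^ 9 = x ^ 1 := by rw [pow_add x 4 5, p4, one_mul, p5]
  have hρ2 (n : ℕ) : ρ g2 (x ^ n) = x ^ (3 * n) := by rw [map_pow, hρ2x, pow_mul]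
  have hρ3 (n : ℕ) : ρ g3 (x ^ n) = x ^ n := by rw [map_pow, hρ3x]
  have twMul_pow (k l m n : ℕ) : twMul ρ θ ((x ^ k) ⊗ₜ (x ^ l)) ((x ^ m) ⊗ₜ (x ^ n)) =
      (x ^ (k + m)) ⊗ₜ[K] (x ^ (l + n)) := by
    rw [twMul_tmul_tmul_of_fixed h2 ρ θ hθr hθl hθ23 hθ32 hθ33 (hρ3 l), hρ3, sub_self, zero_tmul,
      add_zero, ← pow_add, ← pow_add, add_tmul, ← two_smul K, inv_smul_smul₀ h2]
  have twMul_y (k l : ℕ) : twMul ρ θ ((x ^ k) ⊗ₜ (x ^ l)) (y ⊗ₜ y) =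
      (2 : K)⁻¹ • ((x ^ k * y + x ^ (k + 2) * y) ⊗ₜ[K] (x ^ l * y) +
        (x ^ k * y - x ^ (k + 2) * y) ⊗ₜ[K] (x ^ (3 * l) * y)) := by
    rw [twMul_tmul_tmul_of_fixed h2 ρ θ hθr hθl hθ23 hθ32 hθ33 (hρ3 l), hρ3y, hρ2, ← mul_assoc,
      ← pow_add]
  have hΔ1 : Δ (x ^ 1) = (2 : K)⁻¹ • ((x ^ 1) ⊗ₜ[K] (x ^ 1) + (x ^ 1) ⊗ₜ[K] (x ^ 3) +
      (x ^ 3) ⊗ₜ[K] (x ^ 1) - (x ^ 3) ⊗ₜ[K] (x ^ 3)) := by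
    simpa only [pow_one] using hΔx
  have hΔ2 : Δ (x ^ 2) = (x ^ 2) ⊗ₜ[K] (x ^ 2) := by
    rw [show x ^ 2 = x ^ 1 * x ^ 1 by rw [← pow_add], hΔm, hΔ1]
    simp only [twMul_add_left, twMul_add_right, twMul_sub_left, twMul_sub_right, twMul_smul_left,
      twMul_smul_right, twMul_pow, ← pow_add, Nat.reduceAdd, p4, p6]
    match_scalars <;> field_simp <;> ring
  have hΔ3 : Δ (x ^ 3) = (2 : K)⁻¹ • ((x ^ 3) ⊗ₜ[K] (x ^ 3) + (x ^ 3) ⊗ₜ[K] (x ^ 1) +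
      (x ^ 1) ⊗ₜ[K] (x ^ 3) - (x ^ 1) ⊗ₜ[K] (x ^ 1)) := by
    rw [show x ^ 3 = x ^ 1 * x ^ 2 by rw [← pow_add], hΔm, hΔ1, hΔ2]
    simp only [twMul_add_left, twMul_sub_left, twMul_smul_left, twMul_pow, ← pow_add, Nat.reduceAdd,
      p5]
  have hΔ1y : Δ (x ^ 1 * y) = (x ^ 1 * y) ⊗ₜ[K] (x ^ 1 * y) := by
    rw [hΔm, hΔ1, hΔy]
    simp only [twMul_add_left, twMul_sub_left, twMul_smul_left, twMul_y, Nat.reduceAdd,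
      Nat.reduceMul, p5, p9, add_tmul, sub_tmul]
    match_scalars <;> field_simp <;> ring
  have hΔ2y : Δ (x ^ 2 * y) = (x ^ 2 * y) ⊗ₜ[K] (x ^ 2 * y) := by
    rw [hΔm, hΔ2, hΔy]
    simp only [twMul_y, Nat.reduceAdd, Nat.reduceMul, p4, p6, add_tmul, sub_tmul]
    match_scalars <;> field_simp <;> ring
  have hΔ3y : Δ (x ^ 3 * y) = (x ^ 3 * y) ⊗ₜ[K] (x ^ 3 * y) := by
    rw [hΔm, hΔ3, hΔy]
    simp only [twMul_add_left, twMul_sub_left, twMul_smul_left, twMul_y, Nat.reduceAdd,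
      Nat.reduceMul, p5, p9, add_tmul, sub_tmul]
    match_scalars <;> field_simp <;> ring
  exact ⟨hΔ2, hΔ3, hΔ1y, hΔ2y, hΔ3y⟩

end twMul

theorem stmt_16 {K : Type*} [Field K] (ι : K) (hι : IsPrimitiveRoot ι 4)
    (ζ : K) (hζ : ζ ^ 4 = 1)
    (ρ : GG →* (SecondAlg K ζ →ₐ[K] SecondAlg K ζ))
    (hρ2x : ρ g2 (xS K ζ) = xS K ζ ^ 3) (hρ2y : ρ g2 (yS K ζ) = xS K ζ ^ 3 * yS K ζ)
    (hρ3x : ρ g3 (xS K ζ) = xS K ζ) (hρ3y : ρ g3 (yS K ζ) = xS K ζ ^ 2 * yS K ζ)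
    (θ : GG → GG → K)
    (hθr : ∀ g h h' : GG, θ g (h * h') = θ g h * θ g h')
    (hθl : ∀ g g' h : GG, θ (g * g') h = θ g h * θ g' h)
    (hθ22 : θ g2 g2 = ζ ^ 2) (hθ23 : θ g2 g3 = -1)
    (hθ32 : θ g3 g2 = -1) (hθ33 : θ g3 g3 = 1)
    -- the coproduct `Δ : A → A ⊗̂ A`
    (Δ : SecondAlg K ζ →ₗ[K] SecondAlg K ζ ⊗[K] SecondAlg K ζ)
    (hΔ1 : Δ 1 = (1 : SecondAlg K ζ) ⊗ₜ[K] (1 : SecondAlg K ζ))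
    (hΔm : ∀ a b : SecondAlg K ζ, Δ (a * b) = twMul ρ θ (Δ a) (Δ b))
    (hΔx : Δ (xS K ζ) = (2 : K)⁻¹ •
      ((xS K ζ) ⊗ₜ[K] (xS K ζ) + (xS K ζ) ⊗ₜ[K] (xS K ζ ^ 3) +
        (xS K ζ ^ 3) ⊗ₜ[K] (xS K ζ) - (xS K ζ ^ 3) ⊗ₜ[K] (xS K ζ ^ 3)))
    (hΔy : Δ (yS K ζ) = (yS K ζ) ⊗ₜ[K] (yS K ζ))
    -- the counit `ε : A → K` with `ε(x) = ε(y) = 1`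
    (ε : SecondAlg K ζ →ₐ[K] K)
    (hεx : ε (xS K ζ) = 1) (hεy : ε (yS K ζ) = 1)
    -- the antipode `S`, given on the basis of group-like elements
    (S : SecondAlg K ζ →ₗ[K] SecondAlg K ζ)
    (hSw1 : S (w1S K ζ) = w1S K ζ) (hSw2 : S (w2S K ι ζ) = w2S K ι ζ)
    (hSw3 : S (w3S K ι ζ) = w3S K ι ζ) (hSw4 : S (w4S K ζ) = w4S K ζ)
    (hSe1 : S (e1S K ζ) = (2 : K)⁻¹ •
      (ζ⁻¹ • e1S K ζ + e2S K ζ - ζ⁻¹ • e3S K ζ + e4S K ζ))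
    (hSe2 : S (e2S K ζ) = (2 : K)⁻¹ •
      (e1S K ζ + ζ⁻¹ • e2S K ζ + e3S K ζ - ζ⁻¹ • e4S K ζ))
    (hSe3 : S (e3S K ζ) = (2 : K)⁻¹ •
      (-(ζ⁻¹ • e1S K ζ) + e2S K ζ + ζ⁻¹ • e3S K ζ + e4S K ζ))
    (hSe4 : S (e4S K ζ) = (2 : K)⁻¹ •
      (e1S K ζ - ζ⁻¹ • e2S K ζ + e3S K ζ + ζ⁻¹ • e4S K ζ)) :
    -- `S` is an antipode: `∑ S(a₁)a₂ = ε(a)1 = ∑ a₁S(a₂)`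
    ∀ a : SecondAlg K ζ,
      (LinearMap.mul' K (SecondAlg K ζ))
          ((TensorProduct.map S LinearMap.id) (Δ a)) = ε a • (1 : SecondAlg K ζ) ∧
      (LinearMap.mul' K (SecondAlg K ζ))
          ((TensorProduct.map LinearMap.id S) (Δ a)) = ε a • (1 : SecondAlg K ζ) := by
  have h4 : (4 : K) ≠ 0 := by simpa using hι.neZero'.out
  have h2 : (2 : K) ≠ 0 := fun h ↦ h4 (by linear_combination 2 * h)
  have hι0 : ι ≠ 0 := hι.ne_zero (by norm_num)
  have hζ0 : ζ ≠ 0 := fun h ↦ by simp [h] at hζ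
  set x := xS K ζ with hx
  set y := yS K ζ with hy
  have hadd4 (n : ℕ) : x ^ (n + 4) = x ^ n := xS_pow_add_four n
  have h0 : x ^ 0 = 1 := pow_zero x
  have hyy : y * y = (2 : K)⁻¹ • (ζ • (x ^ 0) + x ^ 1 - ζ • x ^ 2 + x ^ 3) := by
    rw [pow_zero, pow_one]
    exact yS_mul_yS
  -- the antipode fixes the powers of `x`
  have hSsum : S x + S (x ^ 3) = x + x ^ 3 := by
    have := congrArg₂ (· + ·) hSw2 hSw3
    simp only [w2S, w3S, ← hx, ← map_add] at this
    convert this using 1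
    · rw [← map_add]; congr 1; match_scalars <;> field_simp <;> ring
    · match_scalars <;> field_simp <;> ring
  have hSsub : S x - S (x ^ 3) = x - x ^ 3 := by
    have := congrArg₂ (fun a b ↦ (ι * ζ ^ 2)⁻¹ • (a - b)) hSw2 hSw3
    simp only [w2S, w3S, ← hx, ← map_sub, ← map_smul] at this
    convert this using 1
    · rw [← map_sub]; congr 1; match_scalars <;> field_simp <;> ring
    · match_scalars <;> field_simp <;> ring
  have hS1 : S (x ^ 1) = x ^ 1 := by
    rw [pow_one]
    linear_combination (norm := (match_scalars <;> field_simp <;> ring))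
      (2⁻¹ : K) • hSsum + (2⁻¹ : K) • hSsub
  have hS3 : S (x ^ 3) = x ^ 3 := by
    linear_combination (norm := (match_scalars <;> field_simp <;> ring))
      (2⁻¹ : K) • hSsum - (2⁻¹ : K) • hSsub
  obtain ⟨hΔ2, hΔ3, hΔ1y, hΔ2y, hΔ3y⟩ := coproduct_words (x := x) h2 ρ θ hθr hθl hθ23 hθ32
    hθ33 xS_pow_four hρ2x hρ3x hρ3y hΔm hΔx hΔy
  have hΔx1 : Δ (x ^ 1) = (2 : K)⁻¹ • ((x ^ 1) ⊗ₜ[K] (x ^ 1) + (x ^ 1) ⊗ₜ[K] (x ^ 3) +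
      (x ^ 3) ⊗ₜ[K] (x ^ 1) - (x ^ 3) ⊗ₜ[K] (x ^ 3)) := by
    simpa only [pow_one] using hΔx
  have hε (n : ℕ) : ε (x ^ n) = 1 := by rw [map_pow, hεx, one_pow]
  have hyx (n : ℕ) (a : SecondAlg K ζ) : y * (x ^ n * a) = x ^ (3 * n) * (y * a) := by
    rw [← mul_assoc, hy, hx, yS_mul_xS_pow, mul_assoc]
  simp only [w1S, w4S, e1S, e2S, e3S, e4S, ← hx, ← hy] at hSw1 hSw4 hSe1 hSe2 hSe3 hSe4
  have hxy : x * y = x ^ 1 * y := by rw [pow_one]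
  rw [hxy] at hSe4
  replace hSe3 : S (x ^ 2 * y) = (2 : K)⁻¹ •
      (x ^ 3 * y - ζ⁻¹ • y + ζ⁻¹ • (x ^ 2 * y) + x * y) := hSe3.trans (by module)
  suffices h : LinearMap.mul' K _ ∘ₗ TensorProduct.map S LinearMap.id ∘ₗ Δ =
        ε.toLinearMap.smulRight (1 : SecondAlg K ζ) ∧
      LinearMap.mul' K _ ∘ₗ TensorProduct.map LinearMap.id S ∘ₗ Δ =
        ε.toLinearMap.smulRight (1 : SecondAlg K ζ) from
    fun a ↦ ⟨LinearMap.congr_fun h.1 a, LinearMap.congr_fun h.2 a⟩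
  constructor <;> refine secondAlg_linearMap_ext (fun n hn ↦ ?_) fun n hn ↦ ?_ <;>
    interval_cases n
  all_goals
    rw [← hx]
    try rw [← hy]
    simp only [h0, one_mul, LinearMap.comp_apply, hΔ1, hΔx1, hΔ2, hΔ3, hΔy, hΔ1y, hΔ2y, hΔ3y,
      map_smul, map_add, map_sub, TensorProduct.map_tmul, LinearMap.mul'_apply, LinearMap.id_apply,
      LinearMap.smulRight_apply, AlgHom.toLinearMap_apply, map_mul ε, hε, hεy, map_one ε,
      hSw1, hS1, hSw4, hS3, hSe1, hSe2, hSe3, hSe4]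
    try simp only [hxy, mul_assoc, mul_one, add_mul, sub_mul, mul_add, mul_sub, smul_mul_assoc,
      mul_smul_comm, hyx, hyy, ← pow_add, Nat.reduceAdd, Nat.reduceMul, hadd4, h0]
    match_scalars <;> field_simp <;> ring1
end
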